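/- Let f ∈ C(𝕋), h > 0, and h₂ = h/(4√3). Then (1/3)·W₂*(f, χ_h) ≤ (2/3)·K₂(f, h₂) ≤ (1/2)·ω₂(f, 2h₂) ≤ 2·K₂(f, h₂) ≤ 5·W₂*(f, χ_h). -/

import Mathlib

/-!
Write `S f t x = ∫_{t-x}^{t+x} f`, so that `(f * χ_{2x})(t) = S f t x / (2x)`, and also
`S f t x = ∫_0^x (f(t+v) + f(t-v)) dv`. The second form turns bounds on second differences
into bounds on `S f t x - 2x f(t)` (`sym_sub_le`).

For the two lower bounds on `K₂`, let `g` be any admissible `C²` function. Taylor's estimate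
`|g(t+v) - 2g(t) + g(t-v)| ≤ v² ‖g''‖` (`second_diff_le`) gives
`ω₂(f, 2h₂) ≤ 4‖f-g‖ + 4h₂²‖g''‖`, and, integrated in `v`,
`W₂(f, χ_u) ≤ 2‖f-g‖ + (u²/24)‖g''‖`, where `h²/24 = 2h₂²`.

For the two upper bounds on `K₂`, an explicit smoothing `g` of `f` is used.

* With `H = 2h₂` and `g = f * χ_H * χ_H`, i.e. `g(t) = H⁻² ∫_0^H S f t y dy`, one has
  `‖f-g‖ ≤ ω₂(f,H)/2` and `g'' = H⁻² Δ²_H f`, so that `K₂(f,h₂) ≤ (1/2 + 1/4) ω₂(f,H)`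
  (`K2_le_omega2`).
* With `s = h/4` and `g = f * χ_s * χ_s * χ_{2s}`, i.e.
  `g(t) = (2s³)⁻¹ ∫_0^s ∫_0^s S f t (y+z) dz dy`, the function `g` is an average of the means
  `f * χ_u` with `0 < u ≤ h`, so `‖f-g‖ ≤ W₂*`; this is the gain over estimating the three
  convolutions successively, which would cost `3 W₂*`. Moreover
  `2s³ g''(t) = S f t (2s) - 2 S f t s = 4s (f*χ_{4s} - f*χ_{2s})(t)`, so
  `‖g''‖ ≤ 4 W₂* / s²`. Hence `K₂(f,h₂) ≤ (1 + 4/3) W₂* ≤ (5/2) W₂*` (`K2_le_W2star`).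
-/

open MeasureTheory Real

/-- Uniform (sup) norm of a real function. -/
noncomputable def unorm (f : ℝ → ℝ) : ℝ := ⨆ u : ℝ, |f u|

/-- Convolution of two real functions. -/
noncomputable def conv (f g : ℝ → ℝ) : ℝ → ℝ := fun t => ∫ u : ℝ, f u * g (t - u)

/-- Normalized characteristic function of `(-h/2, h/2)`. -/
noncomputable def chi (h : ℝ) : ℝ → ℝ := fun t => if -h/2 < t ∧ t < h/2 then 1/h else 0

/-- Convolution powers `χ_h^k` (defined for `k ≥ 1`; junk value `0` at `k = 0`). -/
noncomputable def chiPow (h : ℝ) : ℕ → (ℝ → ℝ)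
  | 0 => fun _ => 0
  | 1 => chi h
  | (k+2) => conv (chiPow h (k+1)) (chi h)

/-- Special modulus of continuity `W₂(f, χ_h^k) = ‖f - f*χ_h^k‖`. -/
noncomputable def W2 (f : ℝ → ℝ) (h : ℝ) (k : ℕ) : ℝ :=
  unorm (fun t => f t - conv f (chiPow h k) t)

/-- `W₂*(f, χ_h^k) = sup_{0 < u ≤ h} W₂(f, χ_u^k)`. -/
noncomputable def W2star (f : ℝ → ℝ) (h : ℝ) (k : ℕ) : ℝ :=
  ⨆ u : Set.Ioc (0:ℝ) h, W2 f u.1 k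

/-- Second Peetre K-functional: infimum over twice continuously differentiable
1-periodic functions `g` of `‖f - g‖ + h² ‖D²g‖`. -/
noncomputable def K2 (f : ℝ → ℝ) (h : ℝ) : ℝ :=
  ⨅ g : {g : ℝ → ℝ // ContDiff ℝ 2 g ∧ Function.Periodic g 1},
    unorm (fun t => f t - g.1 t) + h^2 * unorm (iteratedDeriv 2 g.1)

/-- Generalized K-functional `K̃₂(f, h₁, h₂)`. -/
noncomputable def Ktilde2 (f : ℝ → ℝ) (h1 h2 : ℝ) : ℝ :=
  ⨅ p : {p : (ℝ → ℝ) × (ℝ → ℝ) //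
      (ContDiff ℝ 1 p.1 ∧ Function.Periodic p.1 1) ∧
      (ContDiff ℝ 2 p.2 ∧ Function.Periodic p.2 1)},
    unorm (fun t => f t - p.1.1 t) + h1 * unorm (deriv (fun t => p.1.1 t - p.1.2 t))
      + h2^2 * unorm (iteratedDeriv 2 p.1.2)

/-- Classical second modulus of smoothness. -/
noncomputable def omega2 (f : ℝ → ℝ) (h : ℝ) : ℝ :=
  ⨆ u : Set.Ioc (0:ℝ) h, ⨆ t : ℝ, |f (t + u.1) - 2 * f t + f (t - u.1)|

/-- `τ` is a real 1-periodic trigonometric polynomial of degree at most `n - 1`. -/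
def IsTrigPolyDegLT (n : ℕ) (τ : ℝ → ℝ) : Prop :=
  ∃ a b : ℕ → ℝ, ∀ t : ℝ, τ t =
    ∑ j ∈ Finset.range n, (a j * Real.cos (2 * Real.pi * j * t) + b j * Real.sin (2 * Real.pi * j * t))

/-- Best approximation `E_{n-1}(f)` by trigonometric polynomials of degree at most `n-1`. -/
noncomputable def bestApprox (n : ℕ) (f : ℝ → ℝ) : ℝ :=
  ⨅ τ : {τ : ℝ → ℝ // IsTrigPolyDegLT n τ}, unorm (fun t => f t - τ.1 t)

/-! ### Sup norms, primitives and symmetric integrals -/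

/-- The primitive of `f` vanishing at `0`. -/
noncomputable def prim (f : ℝ → ℝ) (x : ℝ) : ℝ := ∫ v in (0:ℝ)..x, f v

/-- The symmetric integral `∫_{t-x}^{t+x} f`, written as a difference of primitives. -/
noncomputable def symInt (f : ℝ → ℝ) (t x : ℝ) : ℝ := prim f (t + x) - prim f (t - x)

lemma unorm_le {f : ℝ → ℝ} {C : ℝ} (hC : ∀ t, |f t| ≤ C) : unorm f ≤ C := ciSup_le hC

lemma unorm_nonneg (f : ℝ → ℝ) : 0 ≤ unorm f := Real.iSup_nonneg fun _ => abs_nonneg _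

/-- Boundedness is needed: for unbounded `f` the supremum defining `unorm f` is the junk value
`0`. -/
lemma le_unorm {f : ℝ → ℝ} {C : ℝ} (hC : ∀ t, |f t| ≤ C) (t : ℝ) : |f t| ≤ unorm f :=
  le_ciSup (f := fun u => |f u|) ⟨C, by rintro _ ⟨u, rfl⟩; exact hC u⟩ t

lemma exists_bound {f : ℝ → ℝ} (hf : Continuous f) (hper : Function.Periodic f 1) :
    ∃ C, ∀ t, |f t| ≤ C := by
  obtain ⟨C, hC⟩ := (hper.isBounded_of_continuous one_ne_zero hf).exists_norm_le
  exact ⟨C, fun t => hC _ ⟨t, rfl⟩⟩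

lemma abs_le_unorm {f : ℝ → ℝ} (hf : Continuous f) (hper : Function.Periodic f 1) (t : ℝ) :
    |f t| ≤ unorm f := by
  obtain ⟨C, hC⟩ := exists_bound hf hper
  exact le_unorm hC t

lemma hasDerivAt_prim {f : ℝ → ℝ} (hf : Continuous f) (x : ℝ) : HasDerivAt (prim f) (f x) x :=
  (hf.integral_hasStrictDerivAt 0 x).hasDerivAt

lemma continuous_prim {f : ℝ → ℝ} (hf : Continuous f) : Continuous (prim f) :=
  continuous_iff_continuousAt.2 fun x => (hasDerivAt_prim hf x).continuousAt

lemma prim_sub {f : ℝ → ℝ} (hf : Continuous f) (a b : ℝ) :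
    prim f b - prim f a = ∫ v in a..b, f v :=
  intervalIntegral.integral_interval_sub_left (hf.intervalIntegrable _ _)
    (hf.intervalIntegrable _ _)

lemma integral_add_left {f : ℝ → ℝ} (hf : Continuous f) (t u : ℝ) :
    ∫ y in (0:ℝ)..u, f (t + y) = prim f (t + u) - prim f t := by
  rw [intervalIntegral.integral_comp_add_left f t, prim_sub hf, add_zero]

lemma integral_sub_left {f : ℝ → ℝ} (hf : Continuous f) (t u : ℝ) :
    ∫ y in (0:ℝ)..u, f (t - y) = prim f t - prim f (t - u) := by
  rw [intervalIntegral.integral_comp_sub_left f t, prim_sub hf, sub_zero]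

lemma symInt_eq {f : ℝ → ℝ} (hf : Continuous f) (t x : ℝ) :
    symInt f t x = ∫ v in t - x..t + x, f v := prim_sub hf _ _

lemma symInt_eq' {f : ℝ → ℝ} (hf : Continuous f) (t x : ℝ) :
    symInt f t x = ∫ v in (0:ℝ)..x, (f (t + v) + f (t - v)) := by
  rw [intervalIntegral.integral_add ((by fun_prop : Continuous _).intervalIntegrable _ _)
    ((by fun_prop : Continuous _).intervalIntegrable _ _), integral_add_left hf,
    integral_sub_left hf, symInt]
  ring

lemma continuous_symInt {f : ℝ → ℝ} (hf : Continuous f) (t : ℝ) : Continuous (symInt f t) := by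
  have := continuous_prim hf
  unfold symInt
  fun_prop

lemma symInt_periodic {f : ℝ → ℝ} (hf : Continuous f) (hper : Function.Periodic f 1) (t x : ℝ) :
    symInt f (t + 1) x = symInt f t x := by
  rw [symInt_eq' hf, symInt_eq' hf]
  congr 1
  ext v
  rw [add_right_comm, hper, add_sub_right_comm, hper]

lemma abs_integral_le {φ B : ℝ → ℝ} (hB : Continuous B) {x : ℝ} (hx : 0 ≤ x)
    (hle : ∀ v, 0 ≤ v → v ≤ x → |φ v| ≤ B v) :
    |∫ v in (0:ℝ)..x, φ v| ≤ ∫ v in (0:ℝ)..x, B v := by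
  rw [← Real.norm_eq_abs]
  exact intervalIntegral.norm_integral_le_of_norm_le hx
    (Filter.Eventually.of_forall fun v hv => hle v hv.1.le hv.2)
    (hB.intervalIntegrable (μ := volume) _ _)

/-- Integrating a bound on second differences of `f` at `t` bounds the error of the symmetric
mean of `f` about `t`. -/
lemma sym_sub_le {f : ℝ → ℝ} (hf : Continuous f) {B : ℝ → ℝ} (hB : Continuous B) {t x : ℝ}
    (hx : 0 ≤ x) (hle : ∀ v, 0 ≤ v → v ≤ x → |f (t + v) - 2 * f t + f (t - v)| ≤ B v) :
    |symInt f t x - 2 * x * f t| ≤ ∫ v in (0:ℝ)..x, B v := by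
  have : symInt f t x - 2 * x * f t
      = ∫ v in (0:ℝ)..x, (f (t + v) - 2 * f t + f (t - v)) := by
    have e : ∀ v, f (t + v) - 2 * f t + f (t - v) = (f (t + v) + f (t - v)) - 2 * f t :=
      fun v => by ring
    simp_rw [e]
    rw [intervalIntegral.integral_sub ((by fun_prop : Continuous _).intervalIntegrable _ _)
      ((by fun_prop : Continuous _).intervalIntegrable _ _), symInt_eq' hf]
    simp
    ring
  rw [this]
  exact abs_integral_le hB hx hle

lemma abs_symInt_le {f : ℝ → ℝ} (hf : Continuous f) {C : ℝ} (hC : ∀ t, |f t| ≤ C) {t x : ℝ}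
    (hx : 0 ≤ x) : |symInt f t x| ≤ 2 * x * C := by
  rw [symInt_eq' hf]
  refine (abs_integral_le (B := fun _ => 2 * C) continuous_const hx fun v _ _ => ?_).trans ?_
  · have := abs_add_le (f (t + v)) (f (t - v))
    linarith [hC (t + v), hC (t - v)]
  · simp
    linarith

lemma conv_chi {f : ℝ → ℝ} (hf : Continuous f) {u : ℝ} (hu : 0 < u) (t : ℝ) :
    conv f (chiPow u 1) t = symInt f t (u / 2) / u := by
  have e : (fun v => f v * chiPow u 1 (t - v))
      = (Set.Ioo (t - u / 2) (t + u / 2)).indicator (fun v => f v * (1 / u)) := by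
    ext v
    simp only [chiPow, chi, Set.indicator, Set.mem_Ioo]
    by_cases hv : t - u / 2 < v ∧ v < t + u / 2
    · rw [if_pos hv, if_pos ⟨by linarith [hv.2], by linarith [hv.1]⟩]
    · rw [if_neg hv, if_neg fun hc => hv ⟨by linarith [hc.2], by linarith [hc.1]⟩, mul_zero]
  rw [conv, e, integral_indicator measurableSet_Ioo, ← integral_Ioc_eq_integral_Ioo,
    ← intervalIntegral.integral_of_le (by linarith), intervalIntegral.integral_mul_const,
    symInt_eq hf]
  ring

/-! ### `C²` functions -/

/-- Taylor's estimate for second differences. -/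
lemma second_diff_le {g : ℝ → ℝ} (hg : ContDiff ℝ 2 g) {M : ℝ}
    (hM : ∀ t, |iteratedDeriv 2 g t| ≤ M) (t v : ℝ) (hv : 0 ≤ v) :
    |g (t + v) - 2 * g t + g (t - v)| ≤ v ^ 2 * M := by
  have e2 : iteratedDeriv 2 g = deriv (deriv g) := by
    rw [iteratedDeriv_succ, iteratedDeriv_one]
  have d0 : Differentiable ℝ g := hg.differentiable (by norm_num)
  have d1 : Differentiable ℝ (deriv g) := by
    have := hg.differentiable_iteratedDeriv 1 (by norm_num)
    rwa [iteratedDeriv_one] at this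
  have lip : ∀ w, 0 ≤ w → |deriv g (t + w) - deriv g (t - w)| ≤ 2 * w * M := by
    intro w hw
    have := Convex.norm_image_sub_le_of_norm_deriv_le (f := deriv g) (s := Set.univ) (C := M)
      (x := t - w) (y := t + w) (fun x _ => d1 x)
      (fun x _ => by rw [← e2]; exact hM x) convex_univ trivial trivial
    rw [Real.norm_eq_abs, Real.norm_eq_abs, show t + w - (t - w) = 2 * w by ring,
      abs_of_nonneg (by linarith : 0 ≤ 2 * w)] at this
    linarith
  have hd : ∀ w, HasDerivAt (fun w => g (t + w) - 2 * g t + g (t - w))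
      (deriv g (t + w) - deriv g (t - w)) w := by
    intro w
    have h1 := (d0 (t + w)).hasDerivAt.comp_const_add t w
    have h2 := (d0 (t - w)).hasDerivAt.comp_const_sub t w
    exact (h1.sub_const (2 * g t)).add h2
  have hB : ∀ w : ℝ, HasDerivAt (fun w => w ^ 2 * M) (2 * w * M) w := by
    intro w
    simpa using (hasDerivAt_pow 2 w).mul_const M
  exact image_norm_le_of_norm_deriv_right_le_deriv_boundary (a := 0) (b := v)
    (fun w _ => (hd w).continuousAt.continuousWithinAt)
    (fun w _ => (hd w).hasDerivWithinAt) (by simp; ring) hB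
    (fun w hw => lip w hw.1) ⟨hv, le_rfl⟩

lemma contDiff_two_of_hasDerivAt {g g₁ g₂ : ℝ → ℝ} (h1 : ∀ t, HasDerivAt g (g₁ t) t)
    (h2 : ∀ t, HasDerivAt g₁ (g₂ t) t) (hc : Continuous g₂) :
    ContDiff ℝ 2 g ∧ iteratedDeriv 2 g = g₂ := by
  have e1 : deriv g = g₁ := funext fun t => (h1 t).deriv
  have e2 : deriv g₁ = g₂ := funext fun t => (h2 t).deriv
  constructor
  · have c1 : ContDiff ℝ 1 g₁ :=
      contDiff_one_iff_deriv.2 ⟨fun t => (h2 t).differentiableAt, e2 ▸ hc⟩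
    have := (contDiff_succ_iff_deriv (𝕜 := ℝ) (n := 1) (f := g)).2
      ⟨fun t => (h1 t).differentiableAt, by simp, e1 ▸ c1⟩
    simpa [one_add_one_eq_two] using this
  · rw [iteratedDeriv_succ, iteratedDeriv_one, e1, e2]

lemma periodic_iteratedDeriv_two {g : ℝ → ℝ} (hg : Function.Periodic g 1) :
    Function.Periodic (iteratedDeriv 2 g) 1 := by
  intro t
  have := congrFun (iteratedDeriv_comp_add_const 2 g 1) t
  rw [← this, show (fun z => g (z + 1)) = g from funext hg]

/-! ### Elementary properties of the functionals -/

lemma K2_le {f g : ℝ → ℝ} {h A B : ℝ} (hg : ContDiff ℝ 2 g) (hper : Function.Periodic g 1)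
    (hA : ∀ t, |f t - g t| ≤ A) (hB : ∀ t, |iteratedDeriv 2 g t| ≤ B) :
    K2 f h ≤ A + h ^ 2 * B := by
  refine (ciInf_le ⟨0, ?_⟩ ⟨g, hg, hper⟩).trans ?_
  · rintro _ ⟨g, rfl⟩
    have := unorm_nonneg (fun t => f t - g.1 t)
    have := unorm_nonneg (iteratedDeriv 2 g.1)
    positivity
  · exact add_le_add (unorm_le hA) (mul_le_mul_of_nonneg_left (unorm_le hB) (sq_nonneg h))

lemma le_K2 {f : ℝ → ℝ} (hf : Continuous f) (hper : Function.Periodic f 1) {h C : ℝ}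
    (hC : ∀ (g : ℝ → ℝ) (A B : ℝ), ContDiff ℝ 2 g → (∀ t, |f t - g t| ≤ A) →
      (∀ t, |iteratedDeriv 2 g t| ≤ B) → C ≤ A + h ^ 2 * B) : C ≤ K2 f h := by
  have : Nonempty {g : ℝ → ℝ // ContDiff ℝ 2 g ∧ Function.Periodic g 1} :=
    ⟨⟨fun _ => 0, contDiff_const, fun _ => rfl⟩⟩
  refine le_ciInf fun g => hC g.1 _ _ g.2.1 ?_ ?_
  · exact abs_le_unorm (hf.sub g.2.1.continuous) (hper.sub g.2.2)
  · exact abs_le_unorm (g.2.1.continuous_iteratedDeriv 2 le_rfl)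
      (periodic_iteratedDeriv_two g.2.2)

lemma W2_le {f : ℝ → ℝ} (hf : Continuous f) {u C : ℝ} (hu : 0 < u)
    (hC : ∀ t, |symInt f t (u / 2) - 2 * (u / 2) * f t| ≤ u * C) : W2 f u 1 ≤ C := by
  refine unorm_le fun t => ?_
  rw [conv_chi hf hu]
  have e : f t - symInt f t (u / 2) / u = -((symInt f t (u / 2) - 2 * (u / 2) * f t) / u) := by
    field_simp
    ring
  rw [e, abs_neg, abs_div, abs_of_pos hu, div_le_iff₀ hu]
  linarith [hC t]

lemma symInt_le_W2star {f : ℝ → ℝ} (hf : Continuous f) (hper : Function.Periodic f 1) {h : ℝ}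
    (t : ℝ) {x : ℝ} (hx : 0 ≤ x) (hxh : 2 * x ≤ h) :
    |symInt f t x - 2 * x * f t| ≤ 2 * x * W2star f h 1 := by
  rcases hx.eq_or_lt with rfl | hx
  · simp [symInt]
  obtain ⟨M, hM⟩ := exists_bound hf hper
  have key : ∀ u, 0 < u → ∀ t, |symInt f t (u / 2) - 2 * (u / 2) * f t| ≤ u * (2 * M) := by
    intro u hu t
    have h1 := abs_symInt_le hf hM (t := t) (x := u / 2) (by linarith)
    have h2 := abs_sub (symInt f t (u / 2)) (2 * (u / 2) * f t)
    rw [abs_mul, abs_of_pos (by linarith : 0 < 2 * (u / 2))] at h2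
    have h3 := mul_le_mul_of_nonneg_left (hM t) hu.le
    linarith
  have bd : BddAbove (Set.range fun u : Set.Ioc (0:ℝ) h => W2 f u.1 1) :=
    ⟨2 * M, by rintro _ ⟨u, rfl⟩; exact W2_le hf u.2.1 (key _ u.2.1)⟩
  have h2 : W2 f (2 * x) 1 ≤ W2star f h 1 := le_ciSup bd ⟨2 * x, by linarith, hxh⟩
  have eq : ∀ t, f t - conv f (chiPow (2 * x) 1) t = -(symInt f t x - 2 * x * f t) / (2 * x) := by
    intro t
    rw [conv_chi hf (by linarith), show 2 * x / 2 = x by ring]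
    field_simp
    ring
  have h1 : |f t - conv f (chiPow (2 * x) 1) t| ≤ W2 f (2 * x) 1 := by
    refine le_unorm (f := fun t => f t - conv f (chiPow (2 * x) 1) t) (C := 2 * M) (fun t => ?_) t
    have := key (2 * x) (by linarith) t
    rw [show 2 * x / 2 = x by ring] at this
    rw [eq, abs_div, abs_neg, abs_of_pos (by linarith : 0 < 2 * x), div_le_iff₀ (by linarith)]
    linarith
  rw [eq, abs_div, abs_neg, abs_of_pos (by linarith : 0 < 2 * x), div_le_iff₀ (by linarith)] at h1
  nlinarith

lemma le_omega2 {f : ℝ → ℝ} (hf : Continuous f) (hper : Function.Periodic f 1) {H : ℝ}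
    (t : ℝ) {v : ℝ} (hv : 0 < v) (hvH : v ≤ H) :
    |f (t + v) - 2 * f t + f (t - v)| ≤ omega2 f H := by
  obtain ⟨M, hM⟩ := exists_bound hf hper
  have key : ∀ v t, |f (t + v) - 2 * f t + f (t - v)| ≤ 4 * M := by
    intro v t
    have a := abs_le.1 (hM (t + v))
    have b := abs_le.1 (hM t)
    have c := abs_le.1 (hM (t - v))
    exact abs_le.2 ⟨by linarith, by linarith⟩
  have h1 : |f (t + v) - 2 * f t + f (t - v)| ≤ ⨆ t : ℝ, |f (t + v) - 2 * f t + f (t - v)| :=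
    le_ciSup (f := fun t => |f (t + v) - 2 * f t + f (t - v)|)
      ⟨4 * M, by rintro _ ⟨t, rfl⟩; exact key v t⟩ t
  exact h1.trans (le_ciSup
    (f := fun u : Set.Ioc (0:ℝ) H => ⨆ t : ℝ, |f (t + u.1) - 2 * f t + f (t - u.1)|)
    ⟨4 * M, by rintro _ ⟨u, rfl⟩; exact ciSup_le fun t => key _ t⟩ ⟨v, hv, hvH⟩)

/-! ### The four inequalities -/

lemma W2star_le_K2 {f : ℝ → ℝ} (hf : Continuous f) (hper : Function.Periodic f 1) {h k : ℝ}
    (hh : 0 < h) (hk : k ^ 2 = h ^ 2 / 48) : W2star f h 1 ≤ 2 * K2 f k := by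
  have : Nonempty (Set.Ioc (0:ℝ) h) := ⟨⟨h, hh, le_rfl⟩⟩
  refine ciSup_le fun ⟨u, hu, huh⟩ => ?_
  suffices W2 f u 1 / 2 ≤ K2 f k by linarith
  refine le_K2 hf hper fun g A B hg hA hB => ?_
  have hB0 : 0 ≤ B := (abs_nonneg _).trans (hB 0)
  have hsq : u ^ 2 ≤ h ^ 2 := by gcongr
  suffices W2 f u 1 ≤ 2 * A + u ^ 2 / 24 * B by
    rw [hk]
    nlinarith
  refine W2_le hf hu fun t => ?_
  have hgc := hg.continuous
  have h1 := sym_sub_le (t := t) (x := u / 2) hgc (B := fun v => v ^ 2 * B) (by fun_prop)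
    (by linarith) fun v hv _ => second_diff_le hg hB t v hv
  rw [intervalIntegral.integral_mul_const, integral_pow] at h1
  have h2 := sym_sub_le (f := fun t => f t - g t) (t := t) (x := u / 2) (hf.sub hgc)
    (B := fun _ => 4 * A) (by fun_prop) (by linarith) fun v hv _ => by
      have a := abs_le.1 (hA (t + v))
      have b := abs_le.1 (hA t)
      have c := abs_le.1 (hA (t - v))
      exact abs_le.2 ⟨by linarith, by linarith⟩
  rw [intervalIntegral.integral_const] at h2
  have e : symInt (fun t => f t - g t) t (u / 2) = symInt f t (u / 2) - symInt g t (u / 2) := by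
    rw [symInt_eq (f := fun t => f t - g t) (hf.sub hgc), symInt_eq hf, symInt_eq hgc]
    exact intervalIntegral.integral_sub (hf.intervalIntegrable _ _) (hgc.intervalIntegrable _ _)
  rw [e] at h2
  simp only [smul_eq_mul] at h2
  rw [abs_le] at h1 h2 ⊢
  norm_num at h1 h2
  constructor <;> nlinarith [h1.1, h1.2, h2.1, h2.2]

lemma omega2_le_K2 {f : ℝ → ℝ} (hf : Continuous f) (hper : Function.Periodic f 1) {k : ℝ}
    (hk : 0 < k) : omega2 f (2 * k) ≤ 4 * K2 f k := by
  have : Nonempty (Set.Ioc (0:ℝ) (2 * k)) := ⟨⟨2 * k, by linarith, le_rfl⟩⟩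
  refine ciSup_le fun ⟨u, hu, huh⟩ => ciSup_le fun t => ?_
  suffices |f (t + u) - 2 * f t + f (t - u)| / 4 ≤ K2 f k by linarith
  refine le_K2 hf hper fun g A B hg hA hB => ?_
  have hB0 : 0 ≤ B := (abs_nonneg _).trans (hB 0)
  have h1 := abs_le.1 (second_diff_le hg hB t u hu.le)
  have a := abs_le.1 (hA (t + u))
  have b := abs_le.1 (hA t)
  have c := abs_le.1 (hA (t - u))
  have hsq : u ^ 2 * B ≤ (2 * k) ^ 2 * B := by gcongr
  have : |f (t + u) - 2 * f t + f (t - u)| ≤ 4 * A + 4 * k ^ 2 * B :=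
    abs_le.2 ⟨by linarith, by linarith⟩
  linarith

/-- Smoothing by `χ_H * χ_H`, with `H = 2k`. -/
lemma K2_le_omega2 {f : ℝ → ℝ} (hf : Continuous f) (hper : Function.Periodic f 1) {k : ℝ}
    (hk : 0 < k) : K2 f k ≤ 3 / 4 * omega2 f (2 * k) := by
  obtain ⟨H, hH⟩ : ∃ H, H = 2 * k := ⟨_, rfl⟩
  have hH0 : 0 < H := by linarith
  rw [← hH]
  set w := omega2 f H with hw
  have hF := continuous_prim hf
  set F := prim f with hFdef
  set F₂ := prim F with hF₂def
  have dF : ∀ x, HasDerivAt F (f x) x := hasDerivAt_prim hf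
  have dF₂ : ∀ x, HasDerivAt F₂ (F x) x := hasDerivAt_prim hF
  have w0 : 0 ≤ w := (abs_nonneg _).trans (le_omega2 hf hper 0 hH0 le_rfl)
  have hdiff : ∀ t v, 0 ≤ v → v ≤ H → |f (t + v) - 2 * f t + f (t - v)| ≤ w := by
    intro t v hv hvH
    rcases hv.eq_or_lt with rfl | hv
    · rw [show f (t + 0) - 2 * f t + f (t - 0) = 0 by rw [add_zero, sub_zero]; ring, abs_zero]
      exact w0
    · exact le_omega2 hf hper t hv hvH
  set g : ℝ → ℝ := fun t => (∫ y in (0:ℝ)..H, symInt f t y) / H ^ 2 with hg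
  have gper : Function.Periodic g 1 := fun t => by
    simp only [hg, symInt_periodic hf hper]
  have gF : g = fun t => (F₂ (t + H) - 2 * F₂ t + F₂ (t - H)) / H ^ 2 := by
    ext t
    simp only [hg, symInt, ← hFdef]
    rw [intervalIntegral.integral_sub ((by fun_prop : Continuous _).intervalIntegrable _ _)
      ((by fun_prop : Continuous _).intervalIntegrable _ _), integral_add_left hF,
      integral_sub_left hF]
    ring
  obtain ⟨gC, g2⟩ := contDiff_two_of_hasDerivAt (g := g)
    (g₁ := fun t => (F (t + H) - 2 * F t + F (t - H)) / H ^ 2)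
    (g₂ := fun t => (f (t + H) - 2 * f t + f (t - H)) / H ^ 2)
    (fun t => by
      rw [gF]
      exact ((((dF₂ (t + H)).comp_add_const t H).sub ((dF₂ t).const_mul 2)).add
        ((dF₂ (t - H)).comp_sub_const t H)).div_const _)
    (fun t => ((((dF (t + H)).comp_add_const t H).sub ((dF t).const_mul 2)).add
        ((dF (t - H)).comp_sub_const t H)).div_const _)
    (by fun_prop)
  have hA : ∀ t, |f t - g t| ≤ w / 2 := by
    intro t
    have h1 : |∫ y in (0:ℝ)..H, (symInt f t y - 2 * y * f t)| ≤ ∫ y in (0:ℝ)..H, y * w := by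
      refine abs_integral_le (by fun_prop) hH0.le fun y hy hyH => ?_
      have := sym_sub_le hf (B := fun _ => w) continuous_const hy
        fun v hv hvy => hdiff t v hv (hvy.trans hyH)
      simpa using this
    have hS := continuous_symInt hf t
    rw [intervalIntegral.integral_sub (hS.intervalIntegrable _ _)
      ((by fun_prop : Continuous _).intervalIntegrable _ _),
      intervalIntegral.integral_mul_const, intervalIntegral.integral_mul_const,
      intervalIntegral.integral_const_mul, integral_id] at h1
    have e : f t - g t = -((∫ y in (0:ℝ)..H, symInt f t y) - 2 * ((H ^ 2 - 0 ^ 2) / 2) * f t)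
        / H ^ 2 := by
      simp only [hg]
      field_simp
      ring
    rw [e, abs_div, abs_neg, abs_of_pos (by positivity : 0 < H ^ 2), div_le_iff₀ (by positivity)]
    linarith
  have hB : ∀ t, |iteratedDeriv 2 g t| ≤ w / H ^ 2 := by
    intro t
    rw [g2, abs_div, abs_of_pos (by positivity : 0 < H ^ 2)]
    gcongr
    exact hdiff t H hH0.le le_rfl
  refine (K2_le gC gper hA hB).trans (le_of_eq ?_)
  rw [hH]
  field_simp
  ring

/-- Smoothing by `χ_s * χ_s * χ_{2s}`, with `s = h/4`. -/
lemma K2_le_W2star {f : ℝ → ℝ} (hf : Continuous f) (hper : Function.Periodic f 1) {h k : ℝ}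
    (hh : 0 < h) (hk : k ^ 2 = h ^ 2 / 48) : K2 f k ≤ 5 / 2 * W2star f h 1 := by
  obtain ⟨s, hs⟩ : ∃ s, s = h / 4 := ⟨_, rfl⟩
  have hs0 : 0 < s := by linarith
  have hW := fun t x => symInt_le_W2star hf hper (h := h) t (x := x)
  set w := W2star f h 1 with hw
  have w0 : 0 ≤ w := by
    have := (abs_nonneg _).trans (hW 0 s hs0.le (by linarith))
    exact nonneg_of_mul_nonneg_right this (by linarith)
  have hF := continuous_prim hf
  set F := prim f with hFdef
  have hF₂ := continuous_prim hF
  set F₂ := prim F with hF₂def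
  set F₃ := prim F₂ with hF₃def
  have dF : ∀ x, HasDerivAt F (f x) x := hasDerivAt_prim hf
  have dF₂ : ∀ x, HasDerivAt F₂ (F x) x := hasDerivAt_prim hF
  have dF₃ : ∀ x, HasDerivAt F₃ (F₂ x) x := hasDerivAt_prim hF₂
  set g : ℝ → ℝ := fun t =>
    (∫ y in (0:ℝ)..s, ∫ z in (0:ℝ)..s, symInt f t (y + z)) / (2 * s ^ 3) with hg
  have gper : Function.Periodic g 1 := fun t => by
    simp only [hg, symInt_periodic hf hper]
  have inner : ∀ t y, ∫ z in (0:ℝ)..s, symInt f t (y + z)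
      = F₂ (t + s + y) - F₂ (t + y) - (F₂ (t - y) - F₂ (t - s - y)) := by
    intro t y
    simp only [symInt, ← hFdef, ← add_assoc, ← sub_sub]
    rw [intervalIntegral.integral_sub ((by fun_prop : Continuous _).intervalIntegrable _ _)
      ((by fun_prop : Continuous _).intervalIntegrable _ _), integral_add_left hF,
      integral_sub_left hF, add_right_comm t y s, sub_right_comm t y s]
  have gF : g = fun t => (F₃ (t + 2 * s) - 2 * F₃ (t + s) + 2 * F₃ (t - s) - F₃ (t - 2 * s))
      / (2 * s ^ 3) := by
    ext t
    simp only [hg, inner]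
    have i1 : ∀ c : ℝ, IntervalIntegrable (fun y => F₂ (c + y)) volume 0 s :=
      fun c => (by fun_prop : Continuous _).intervalIntegrable _ _
    have i2 : ∀ c : ℝ, IntervalIntegrable (fun y => F₂ (c - y)) volume 0 s :=
      fun c => (by fun_prop : Continuous _).intervalIntegrable _ _
    rw [intervalIntegral.integral_sub ((i1 _).sub (i1 _)) ((i2 _).sub (i2 _)),
      intervalIntegral.integral_sub (i1 _) (i1 _), intervalIntegral.integral_sub (i2 _) (i2 _),
      integral_add_left hF₂, integral_add_left hF₂, integral_sub_left hF₂, integral_sub_left hF₂,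
      show t + s + s = t + 2 * s by ring, show t - s - s = t - 2 * s by ring]
    ring
  have dd : ∀ {P p : ℝ → ℝ}, (∀ x, HasDerivAt P (p x) x) → ∀ t, HasDerivAt
      (fun t => (P (t + 2 * s) - 2 * P (t + s) + 2 * P (t - s) - P (t - 2 * s)) / (2 * s ^ 3))
      ((p (t + 2 * s) - 2 * p (t + s) + 2 * p (t - s) - p (t - 2 * s)) / (2 * s ^ 3)) t := by
    intro P p hP t
    exact (((((hP _).comp_add_const t (2 * s)).sub (((hP _).comp_add_const t s).const_mul 2)).add
      (((hP _).comp_sub_const t s).const_mul 2)).sub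
      ((hP _).comp_sub_const t (2 * s))).div_const _
  obtain ⟨gC, g2⟩ := contDiff_two_of_hasDerivAt (g := g) (fun t => by rw [gF]; exact dd dF₃ t)
    (dd dF₂) (by fun_prop)
  have hA : ∀ t, |f t - g t| ≤ w := by
    intro t
    have hS := continuous_symInt hf t
    -- The value of a double integral over `[0,s]²` of a multiple of `y + z`.
    have mean : ∀ c : ℝ, ∫ y in (0:ℝ)..s, ∫ z in (0:ℝ)..s, 2 * (y + z) * c = 2 * s ^ 3 * c := by
      intro c
      have i : ∀ y : ℝ, ∫ z in (0:ℝ)..s, 2 * (y + z) * c = 2 * (y * s + s ^ 2 / 2) * c := by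
        intro y
        rw [intervalIntegral.integral_mul_const, intervalIntegral.integral_const_mul,
          intervalIntegral.integral_add (by simp) (by simp), integral_id, intervalIntegral.integral_const, smul_eq_mul]
        ring
      simp only [i]
      rw [intervalIntegral.integral_mul_const, intervalIntegral.integral_const_mul,
        intervalIntegral.integral_add ((by fun_prop : Continuous _).intervalIntegrable _ _)
          (by simp), intervalIntegral.integral_mul_const, integral_id,
        intervalIntegral.integral_const, smul_eq_mul]
      ring
    have h1 : |∫ y in (0:ℝ)..s, ∫ z in (0:ℝ)..s, (symInt f t (y + z) - 2 * (y + z) * f t)|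
        ≤ ∫ y in (0:ℝ)..s, ∫ z in (0:ℝ)..s, 2 * (y + z) * w := by
      refine abs_integral_le ?_ hs0.le fun y hy hys =>
        abs_integral_le (by fun_prop) hs0.le fun z hz hzs =>
          hW t (y + z) (by linarith) (by linarith)
      exact intervalIntegral.continuous_parametric_intervalIntegral_of_continuous
        (by fun_prop) continuous_const
    have h2 : ∫ y in (0:ℝ)..s, ∫ z in (0:ℝ)..s, (symInt f t (y + z) - 2 * (y + z) * f t)
        = (∫ y in (0:ℝ)..s, ∫ z in (0:ℝ)..s, symInt f t (y + z)) - 2 * s ^ 3 * f t := by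
      rw [← mean, ← intervalIntegral.integral_sub]
      · congr 1
        ext y
        exact intervalIntegral.integral_sub
          ((by fun_prop : Continuous _).intervalIntegrable _ _)
          ((by fun_prop : Continuous _).intervalIntegrable _ _)
      · exact (intervalIntegral.continuous_parametric_intervalIntegral_of_continuous
          (by fun_prop) continuous_const).intervalIntegrable _ _
      · exact (intervalIntegral.continuous_parametric_intervalIntegral_of_continuous
          (by fun_prop) continuous_const).intervalIntegrable _ _
    rw [h2, mean] at h1
    have e : f t - g t = -((∫ y in (0:ℝ)..s, ∫ z in (0:ℝ)..s, symInt f t (y + z))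
        - 2 * s ^ 3 * f t) / (2 * s ^ 3) := by
      simp only [hg]
      field_simp
      ring
    rw [e, abs_div, abs_neg, abs_of_pos (by positivity : 0 < 2 * s ^ 3),
      div_le_iff₀ (by positivity)]
    linarith
  have hB : ∀ t, |iteratedDeriv 2 g t| ≤ 8 * s * w / (2 * s ^ 3) := by
    intro t
    rw [g2, abs_div, abs_of_pos (by positivity : 0 < 2 * s ^ 3)]
    gcongr
    have a := abs_le.1 (hW t s hs0.le (by linarith))
    have b := abs_le.1 (hW t (2 * s) (by linarith) (by linarith))
    simp only [symInt, ← hFdef] at a b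
    exact abs_le.2 ⟨by linarith, by linarith⟩
  refine (K2_le gC gper hA hB).trans ?_
  have e : w + k ^ 2 * (8 * s * w / (2 * s ^ 3)) = 7 / 3 * w := by
    rw [hk, hs]
    field_simp
    ring
  rw [e]
  linarith

/-- Corollary 1, second chain: with `h₂ = h/(4√3)`,
`(1/3)·W₂*(f,χ_h) ≤ (2/3)·K₂(f,h₂) ≤ (1/2)·ω₂(f,2h₂) ≤ 2·K₂(f,h₂) ≤ 5·W₂*(f,χ_h)`. -/
theorem stmt8 (f : ℝ → ℝ) (hf : Continuous f) (hper : Function.Periodic f 1)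
    (h : ℝ) (hh : 0 < h) (h₂ : ℝ) (hh₂ : h₂ = h / (4 * Real.sqrt 3)) :
    (1/3) * W2star f h 1 ≤ (2/3) * K2 f h₂ ∧
    (2/3) * K2 f h₂ ≤ (1/2) * omega2 f (2 * h₂) ∧
    (1/2) * omega2 f (2 * h₂) ≤ 2 * K2 f h₂ ∧
    2 * K2 f h₂ ≤ 5 * W2star f h 1 := by
  have hpos : 0 < h₂ := by rw [hh₂]; positivity
  have hsq : h₂ ^ 2 = h ^ 2 / 48 := by
    rw [hh₂, div_pow, mul_pow, Real.sq_sqrt (by norm_num)]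
    norm_num
  refine ⟨?_, ?_, ?_, ?_⟩
  · linarith [W2star_le_K2 hf hper hh hsq]
  · linarith [K2_le_omega2 hf hper hpos]
  · linarith [omega2_le_K2 hf hper hpos]
  · linarith [K2_le_W2star hf hper hh hsq]
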